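/- For every non-negative integer k and every non-negative integer n, the number of (25k+4)-colour partitions of 25n+21 is divisible by 5; that is, p_{25k+4}(25n+21) ≡ 0 (mod 5). -/

import Mathlib

/-- `colouredPartitions r n` is the number of `r`-colour partitions of `n`:
multisets of pairs `(m, c)` with `m` a positive integer part and `c` one of `r`
colours, whose parts (first components, with multiplicity) sum to `n`.  Such a
multiset is encoded by its multiplicity function `f : ℕ+ × Fin r →₀ ℕ`. -/
noncomputable def colouredPartitions (r n : ℕ) : ℕ :=
  Nat.card {f : ℕ+ × Fin r →₀ ℕ // (f.sum fun x m => (x.1 : ℕ) * m) = n}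

/-!
Write `F = ∏ (1 - q ^ m)` modulo `5`, so that the generating series of the `r`-colour partitions is
`F ^ (-r)`. Since `F ^ 5 = F(q ^ 5)`, we have `F ^ (-(25k+4)) = F * F ^ (-(5k+1))(q ^ 5)`. By the
pentagonal number theorem the exponents occurring in `F` are the pentagonal numbers, and a
pentagonal number that is `1` modulo `5` is `1` modulo `25`. Hence the coefficient at `25n + 21`
only involves coefficients of `F ^ (-(5k+1)) = F ^ 4 * F ^ (-(k+1))(q ^ 5)` at exponents that are
`4` modulo `5`, and it remains to see that `F ^ 4` has no such exponents.

Split `F = A + B + C` according to the residues `0, 1, 2` of the exponents modulo `5`. The part of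
`F ^ 4` with exponents `4` modulo `5` is `6 A² C² + 12 A B² C + B⁴`, which is `-5 A² C² = 0` once
`B² + A C = 0`. The latter is an identity between double sums over `ℤ × ℤ`, and a reflection of the
lattice `{(k, l) | k ≡ 2 l - 1 mod 5}` preserves all exponents and reverses all signs.
-/

open PowerSeries Finset
open scoped PowerSeries.WithPiTopology

section GeneratingSeries

variable (R : Type*) [CommSemiring R]

theorem coeff_prod_mk_card_fiber {ι : Type*} [Fintype ι] {α : ι → Type*} (w : ∀ i, α i → ℕ)
    [∀ i n, Finite {a // w i a = n}] (n : ℕ) :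
    coeff n (∏ i, mk fun n ↦ (Nat.card {a // w i a = n} : R)) =
      Nat.card {a : ∀ i, α i // ∑ i, w i (a i) = n} := by
  classical
  let weights (a : {a : ∀ i, α i // ∑ i, w i (a i) = n}) : finsuppAntidiag univ n :=
    ⟨Finsupp.equivFunOnFinite.symm fun i ↦ w i (a.1 i), by simpa using a.2⟩
  have fiberEquiv (l : finsuppAntidiag univ n) :
      {a // weights a = l} ≃ ∀ i, {a // w i a = l.1 i} :=
    { toFun a i := ⟨a.1.1 i, DFunLike.congr_fun (congrArg Subtype.val a.2) i⟩
      invFun a := ⟨⟨fun i ↦ a i, by simpa [(a _).2] using (mem_finsuppAntidiag.1 l.2).1⟩,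
        Subtype.ext <| Finsupp.ext fun i ↦ (a i).2⟩
      left_inv _ := rfl
      right_inv _ := rfl }
  have (l : finsuppAntidiag univ n) : Finite {a // weights a = l} := .of_equiv _ (fiberEquiv l).symm
  rw [← Nat.card_congr (Equiv.sigmaFiberEquiv weights), Nat.card_sigma, coeff_prod,
    ← sum_coe_sort, Nat.cast_sum]
  refine sum_congr rfl fun l _ ↦ ?_
  simp [Nat.card_congr (fiberEquiv l), Nat.card_pi]

theorem sum_map_coe_toMultiset (f : ℕ+ →₀ ℕ) :
    (f.toMultiset.map ((↑) : ℕ+ → ℕ)).sum = f.sum fun x m ↦ (x : ℕ) * m := by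
  rw [Finsupp.toMultiset_map, Finsupp.sum_toMultiset,
    Finsupp.sum_mapDomain_index (by simp) (by simp [add_mul])]
  simp only [smul_eq_mul, mul_comm]

theorem map_val_map_toPNat'_parts {n : ℕ} (p : n.Partition) :
    (p.parts.map Nat.toPNat').map (↑) = p.parts := by
  rw [Multiset.map_map]
  exact (Multiset.map_congr rfl fun _ hk ↦ PNat.toPNat'_coe (p.parts_pos hk)).trans p.parts.map_id

/-- The correspondence between partitions of `n` and multiplicity functions on the positive
integers; it identifies the uncoloured partitions of Mathlib with the encoding that
`colouredPartitions` uses in each colour. -/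
noncomputable def multiplicityEquivPartition (n : ℕ) :
    {f : ℕ+ →₀ ℕ // (f.sum fun x m ↦ (x : ℕ) * m) = n} ≃ n.Partition where
  toFun f :=
    { parts := f.1.toMultiset.map (↑)
      parts_pos := by simp +contextual
      parts_sum := by rw [sum_map_coe_toMultiset, f.2] }
  invFun p := ⟨Multiset.toFinsupp (p.parts.map Nat.toPNat'), by
    rw [← sum_map_coe_toMultiset, Multiset.toFinsupp_toMultiset, map_val_map_toPNat'_parts,
      p.parts_sum]⟩
  left_inv f := by ext1; simp
  right_inv p := by
    ext1
    simp only [Multiset.toFinsupp_toMultiset, map_val_map_toPNat'_parts]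

theorem sum_sum_curry_swap {α β M N : Type*} [Fintype β] [Zero M] [AddCommMonoid N]
    (f : α × β →₀ M) (w : α → M → N) :
    ∑ b, ((f.equivMapDomain (.prodComm α β)).curry b).sum w = f.sum fun x m ↦ w x.1 m := by
  let g := f.equivMapDomain (.prodComm α β)
  calc ∑ b, (g.curry b).sum w
    _ = g.curry.sum fun _ h ↦ h.sum w :=
      (Finsupp.sum_fintype g.curry (fun _ h ↦ h.sum w) (by simp)).symm
    _ = g.sum fun x m ↦ w x.2 m := Finsupp.sum_curry_index g fun _ ↦ w
    _ = f.sum fun x m ↦ w x.1 m := Finsupp.sum_equivMapDomain ..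

theorem colouredPartitions_eq_card_pi (r n : ℕ) :
    colouredPartitions r n =
      Nat.card {f : Fin r → ℕ+ →₀ ℕ // ∑ c, (f c).sum (fun x m ↦ (x : ℕ) * m) = n} := by
  let splitColours : (ℕ+ × Fin r →₀ ℕ) ≃ (Fin r → ℕ+ →₀ ℕ) :=
    (Finsupp.equivCongrLeft (.prodComm _ _)).trans
      (Finsupp.curryEquiv.trans Finsupp.equivFunOnFinite)
  exact Nat.card_congr (splitColours.subtypeEquiv fun f ↦ by
    rw [← sum_sum_curry_swap f (fun x m ↦ (x : ℕ) * m)]; rfl)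

theorem mk_colouredPartitions (r : ℕ) :
    (mk fun n ↦ (colouredPartitions r n : R)) =
      (mk fun n ↦ (Fintype.card n.Partition : R)) ^ r := by
  have (n : ℕ) : Finite {f : ℕ+ →₀ ℕ // (f.sum fun x m ↦ (x : ℕ) * m) = n} :=
    .of_equiv _ (multiplicityEquivPartition n).symm
  ext n
  have coeff_pow := coeff_prod_mk_card_fiber R
    (fun (_ : Fin r) (f : ℕ+ →₀ ℕ) ↦ f.sum fun x m ↦ (x : ℕ) * m) n
  simp only [Nat.card_congr (multiplicityEquivPartition _), Nat.card_eq_fintype_card, prod_const,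
    card_univ, Fintype.card_fin] at coeff_pow
  rw [coeff_pow, coeff_mk, colouredPartitions_eq_card_pi]

theorem mk_card_partition_mul_pentagonalSeries (R : Type*) [CommRing R] :
    (mk fun n ↦ (Fintype.card n.Partition : R)) * pentagonalSeries R = 1 := by
  let : TopologicalSpace R := ⊥
  have : DiscreteTopology R := ⟨rfl⟩
  have geometric (i : ℕ) : (∑' j : ℕ, (X : R⟦X⟧) ^ ((i + 1) * j)) * (1 - X ^ (i + 1)) = 1 := by
    simp only [pow_mul]
    exact WithPiTopology.tsum_pow_mul_one_sub_of_constantCoeff_eq_zero (by simp)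
  have product := (Nat.Partition.hasProd_powerSeriesMk_card_restricted R fun _ ↦ True).mul
    (WithPiTopology.hasProd_one_sub_X_pow R)
  simp only [if_true, geometric, Nat.Partition.restricted, implies_true, filter_true, card_univ]
    at product
  exact product.unique hasProd_one

theorem mk_colouredPartitions_mul_pentagonalSeries_pow (R : Type*) [CommRing R] (r : ℕ) :
    (mk fun n ↦ (colouredPartitions r n : R)) * pentagonalSeries R ^ r = 1 := by
  rw [mk_colouredPartitions, ← mul_pow, mk_card_partition_mul_pentagonalSeries, one_pow]

end GeneratingSeries

section ResidueGrading

variable (R : Type*) [CommSemiring R] (m : ℕ)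

/-- The power series all of whose exponents lie in the residue class `r` modulo `m`. These
submodules grade the ring of power series by `ZMod m`. -/
def residueClassSeries (r : ZMod m) : Submodule R R⟦X⟧ where
  carrier := {f | ∀ n : ℕ, (n : ZMod m) ≠ r → coeff n f = 0}
  zero_mem' _ _ := map_zero _
  add_mem' hf hg n hn := by rw [map_add, hf n hn, hg n hn, add_zero]
  smul_mem' a f hf n hn := by rw [coeff_smul, hf n hn, smul_zero]

variable {R m}

instance : SetLike.GradedMonoid (residueClassSeries R m) where
  one_mem n hn := by
    rw [coeff_one, if_neg]
    rintro rfl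
    exact hn Nat.cast_zero
  mul_mem r s f g hf hg n hn := by
    rw [coeff_mul]
    refine sum_eq_zero fun ⟨a, b⟩ hab ↦ ?_
    rw [HasAntidiagonal.mem_antidiagonal] at hab
    by_cases ha : (a : ZMod m) = r
    · have hb : (b : ZMod m) ≠ s := fun hb ↦ hn (by rw [← hab, Nat.cast_add, ha, hb])
      rw [hg b hb, mul_zero]
    · rw [hf a ha, zero_mul]

theorem X_pow_mem_residueClassSeries (n : ℕ) : X ^ n ∈ residueClassSeries R m n := by
  intro k hk
  rw [coeff_X_pow, if_neg]
  rintro rfl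
  exact hk rfl

theorem hasSum_mem_residueClassSeries [TopologicalSpace R] [T2Space R] {ι : Type*} {f : ι → R⟦X⟧}
    {s : R⟦X⟧} {r : ZMod m} (hs : HasSum f s) (hf : ∀ i, f i ∈ residueClassSeries R m r) :
    s ∈ residueClassSeries R m r := fun n hn ↦
  ((WithPiTopology.hasSum_iff_hasSum_coeff R).1 hs n).unique <| by
    simpa only [hf _ n hn] using hasSum_zero

end ResidueGrading

section Pentagonal

theorem natCast_pentagonal_zmod_five (k : ℤ) :
    (pentagonal k : ZMod 5) = 3 * (k * (3 * k - 1)) := by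
  have h := congrArg (Int.cast : ℤ → ZMod 5) (two_mul_natCast_pentagonal k)
  push_cast at h
  have five : (5 : ZMod 5) = 0 := rfl
  linear_combination 3 * h - (pentagonal k : ZMod 5) * five

theorem pentagonal_mod_twentyFive {k : ℤ} (h : pentagonal k % 5 = 1) : pentagonal k % 25 = 1 := by
  have square : 24 * (pentagonal k : ℤ) + 1 = (6 * k - 1) ^ 2 := by
    linear_combination 12 * two_mul_natCast_pentagonal k
  have five_dvd : (5 : ℤ) ∣ 6 * k - 1 :=
    (Nat.prime_iff_prime_int.1 Nat.prime_five).dvd_of_dvd_pow (n := 2) (by push_cast; omega)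
  have twentyFive_dvd : (5 : ℤ) ^ 2 ∣ (6 * k - 1) ^ 2 := pow_dvd_pow_of_dvd five_dvd 2
  omega

-- For fixed `t` the exponent is a quadratic polynomial in `n` with axis `n = (1 - 4 * t) / 2`.
theorem pentagonal_add_pentagonal_reflect (t n : ℤ) :
    pentagonal (5 * t + 2 * (1 - 4 * t - n) - 1) + pentagonal (1 - 4 * t - n) =
      pentagonal (5 * t + 2 * n - 1) + pentagonal n := by
  zify
  refine mul_left_cancel₀ (two_ne_zero (α := ℤ)) ?_
  simp only [mul_add, two_mul_natCast_pentagonal]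
  ring

theorem negOnePow_mul_negOnePow_reflect (t n : ℤ) :
    (5 * t + 2 * (1 - 4 * t - n) - 1).negOnePow * (1 - 4 * t - n).negOnePow =
      -((5 * t + 2 * n - 1).negOnePow * n.negOnePow) := by
  rw [← Int.negOnePow_add, ← Int.negOnePow_add, ← Int.negOnePow_succ, Int.negOnePow_eq_iff]
  exact ⟨1 - 6 * t - 3 * n, by ring⟩

theorem finite_setOf_pentagonal_le (n : ℕ) : {k : ℤ | pentagonal k ≤ n}.Finite :=
  (Set.finite_Iic n).preimage pentagonal_injective.injOn

end Pentagonal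

section Summability

variable {R : Type*} [CommSemiring R] [TopologicalSpace R] {ι κ : Type*}

theorem summable_mul_X_pow {w : ι → ℕ} (hw : ∀ n, {i | w i ≤ n}.Finite) (c : ι → R⟦X⟧) :
    Summable fun i ↦ c i * X ^ w i := by
  refine (WithPiTopology.summable_iff_summable_coeff R).2 fun n ↦ ?_
  refine summable_of_hasFiniteSupport ((hw n).subset fun i hi ↦ ?_)
  contrapose! hi
  simp_all [coeff_mul_X_pow']

theorem hasSum_mul_mul_X_pow {R : Type*} [CommRing R] [TopologicalSpace R] [IsTopologicalRing R]
    [T2Space R] {w : ι → ℕ} {v : κ → ℕ}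
    (hw : ∀ n, {i | w i ≤ n}.Finite) (hv : ∀ n, {j | v j ≤ n}.Finite)
    {c : ι → R⟦X⟧} {d : κ → R⟦X⟧} {f g : R⟦X⟧}
    (hf : HasSum (fun i ↦ c i * X ^ w i) f) (hg : HasSum (fun j ↦ d j * X ^ v j) g) :
    HasSum (fun p : ι × κ ↦ c p.1 * d p.2 * X ^ (w p.1 + v p.2)) (f * g) := by
  have finite_le (n : ℕ) : {p : ι × κ | w p.1 + v p.2 ≤ n}.Finite :=
    ((hw n).prod (hv n)).subset fun p (hp : _ ≤ n) ↦
      ⟨(Nat.le_add_right ..).trans hp, (Nat.le_add_left ..).trans hp⟩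
  have summable := summable_mul_X_pow finite_le fun p ↦ c p.1 * d p.2
  have mul_term (p : ι × κ) : c p.1 * d p.2 * X ^ (w p.1 + v p.2) =
      c p.1 * X ^ w p.1 * (d p.2 * X ^ v p.2) := by rw [pow_add, mul_mul_mul_comm]
  simp only [mul_term] at summable ⊢
  exact HasSum.mul (f := fun i ↦ c i * X ^ w i) (g := fun j ↦ d j * X ^ v j) hf hg summable

end Summability

section PentagonalParts

variable (R : Type*) [CommRing R] [TopologicalSpace R]

/-- The part of Euler's series `∑ k, (-1) ^ k * X ^ pentagonal k` formed by the indices `k` in the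
residue class `i` modulo `5`. The terms outside the class are kept as zeros, so that all parts are
sums over `ℤ`. -/
noncomputable def pentagonalPart (i : ZMod 5) : R⟦X⟧ :=
  ∑' k : ℤ, (if (k : ZMod 5) = i then (k.negOnePow : R⟦X⟧) else 0) * X ^ pentagonal k

theorem hasSum_pentagonalPart (i : ZMod 5) :
    HasSum (fun k : ℤ ↦ (if (k : ZMod 5) = i then (k.negOnePow : R⟦X⟧) else 0) * X ^ pentagonal k)
      (pentagonalPart R i) :=
  (summable_mul_X_pow finite_setOf_pentagonal_le _).hasSum

theorem sum_pentagonalPart [IsTopologicalRing R] [T2Space R] :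
    ∑ i, pentagonalPart R i = pentagonalSeries R := by
  have h := hasSum_sum fun i (_ : i ∈ univ) ↦ hasSum_pentagonalPart R i
  simp only [← sum_mul, sum_ite_eq, mem_univ, if_true] at h
  exact h.unique (WithPiTopology.hasSum_pentagonalSeries R)

theorem pentagonalPart_mem_residueClassSeries [T2Space R] (i : ZMod 5) :
    pentagonalPart R i ∈ residueClassSeries R 5 (3 * (i * (3 * i - 1))) := by
  refine hasSum_mem_residueClassSeries (hasSum_pentagonalPart R i) fun k ↦ ?_
  split_ifs with hk
  · rw [← hk, ← natCast_pentagonal_zmod_five, ← zsmul_eq_mul]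
    exact zsmul_mem (X_pow_mem_residueClassSeries _) _
  · rw [zero_mul]
    exact zero_mem _

theorem hasSum_sum_pentagonalPart_mul [IsTopologicalRing R] [T2Space R] :
    HasSum (fun p : ℤ × ℤ ↦
        (((5 * p.1 + 2 * p.2 - 1).negOnePow * p.2.negOnePow : ℤˣ) : R⟦X⟧) *
          X ^ (pentagonal (5 * p.1 + 2 * p.2 - 1) + pentagonal p.2))
      (∑ j, pentagonalPart R (2 * j - 1) * pentagonalPart R j) := by
  have double_sum := hasSum_sum fun j (_ : j ∈ univ) ↦
    hasSum_mul_mul_X_pow finite_setOf_pentagonal_le finite_setOf_pentagonal_le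
      (hasSum_pentagonalPart R (2 * j - 1)) (hasSum_pentagonalPart R j)
  simp only [← sum_mul, mul_ite, mul_zero, sum_ite_eq, mem_univ, if_true] at double_sum
  let latticeMap (p : ℤ × ℤ) : ℤ × ℤ := (5 * p.1 + 2 * p.2 - 1, p.2)
  have latticeMap_injective : Function.Injective latticeMap := by
    rintro ⟨t, n⟩ ⟨t', n'⟩ h
    simp only [latticeMap, Prod.mk.injEq] at h ⊢
    omega
  have mem_range (p : ℤ × ℤ) (hp : (p.1 : ZMod 5) = 2 * p.2 - 1) : p ∈ Set.range latticeMap := by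
    obtain ⟨t, ht⟩ := (ZMod.intCast_eq_intCast_iff_dvd_sub (2 * p.2 - 1) p.1 5).1 (by simp [hp])
    exact ⟨(t, p.2), Prod.ext (by simp only [latticeMap]; push_cast at ht; linarith) rfl⟩
  rw [← latticeMap_injective.hasSum_iff] at double_sum
  · convert double_sum using 2 with p
    have five : (5 : ZMod 5) = 0 := rfl
    simp [latticeMap, five]
  · intro p hp
    rw [if_neg fun h ↦ hp (mem_range p h), zero_mul, zero_mul]

theorem sum_pentagonalPart_mul_eq_zero [IsTopologicalRing R] [T2Space R] (h2 : IsUnit (2 : R)) :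
    ∑ j, pentagonalPart R (2 * j - 1) * pentagonalPart R j = 0 := by
  have sum := hasSum_sum_pentagonalPart_mul R
  let reflection : ℤ × ℤ ≃ ℤ × ℤ := .prodShear (.refl ℤ) fun t ↦ .subLeft (1 - 4 * t)
  have reflected_sum := reflection.hasSum_iff.2 sum
  simp only [Function.comp_def, reflection, Equiv.prodShear_apply, Equiv.refl_apply,
    Equiv.subLeft_apply, pentagonal_add_pentagonal_reflect, negOnePow_mul_negOnePow_reflect,
    Units.val_neg, Int.cast_neg, neg_mul] at reflected_sum
  have eq_neg := reflected_sum.unique sum.neg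
  have two_isUnit : IsUnit (2 : R⟦X⟧) := map_ofNat (C (R := R)) 2 ▸ h2.map C
  rw [← two_isUnit.mul_right_eq_zero, two_mul]
  nth_rw 1 [eq_neg]
  exact neg_add_cancel _

end PentagonalParts

section FourthPower

-- Every term has the shape `a ^ i * b ^ j * c ^ k`, from which its residue class can be read off.
theorem add_add_pow_four_of_sq_add_mul_eq_zero {S : Type*} [CommRing S] {a b c : S}
    (h : b ^ 2 + a * c = 0) :
    (a + b + c) ^ 4 =
      a ^ 4 * b ^ 0 * c ^ 0 + 4 • (a ^ 3 * b ^ 1 * c ^ 0) - 2 • (a ^ 3 * b ^ 0 * c ^ 1) +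
        8 • (a ^ 2 * b ^ 1 * c ^ 1) + 8 • (a ^ 1 * b ^ 1 * c ^ 2) - 2 • (a ^ 1 * b ^ 0 * c ^ 3) +
        4 • (a ^ 0 * b ^ 1 * c ^ 3) + a ^ 0 * b ^ 0 * c ^ 4 - 5 • (a ^ 2 * b ^ 0 * c ^ 2) := by
  linear_combination (6 * (a + c) ^ 2 + 4 * (a + c) * b + b ^ 2 - a * c) * h

theorem exists_pentagonalSeries_eq_add_add (R : Type*) [CommRing R] (h2 : IsUnit (2 : R)) :
    ∃ a ∈ residueClassSeries R 5 0, ∃ b ∈ residueClassSeries R 5 1,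
      ∃ c ∈ residueClassSeries R 5 2, pentagonalSeries R = a + b + c ∧ b ^ 2 + a * c = 0 := by
  let : TopologicalSpace R := ⊥
  have : DiscreteTopology R := ⟨rfl⟩
  let T := pentagonalPart R
  have hT : ∀ i, T i ∈ residueClassSeries R 5 (3 * (i * (3 * i - 1))) :=
    pentagonalPart_mem_residueClassSeries R
  have sum_T : T 0 + T 1 + T 2 + T 3 + T 4 = pentagonalSeries R :=
    (Fin.sum_univ_five T).symm.trans (sum_pentagonalPart R)
  have sum_mul_T : T 4 * T 0 + T 1 * T 1 + T 3 * T 2 + T 0 * T 3 + T 2 * T 4 = 0 :=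
    (Fin.sum_univ_five fun j : ZMod 5 ↦ T (2 * j - 1) * T j).symm.trans
      (sum_pentagonalPart_mul_eq_zero R h2)
  refine ⟨T 0 + T 2, add_mem (hT 0) (hT 2), T 1, hT 1, T 3 + T 4, add_mem (hT 3) (hT 4), ?_, ?_⟩
  · linear_combination -sum_T
  · linear_combination sum_mul_T

theorem coeff_pentagonalSeries_pow_four_eq_zero (R : Type*) [CommRing R] [CharP R 5] {n : ℕ}
    (hn : (n : ZMod 5) = 4) : coeff n (pentagonalSeries R ^ 4) = 0 := by
  have five : (5 : R) = 0 := CharP.cast_eq_zero R 5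
  have two_isUnit : IsUnit (2 : R) := .of_mul_eq_one 3 (by linear_combination five)
  obtain ⟨a, ha, b, hb, c, hc, hF, hrel⟩ := exists_pentagonalSeries_eq_add_add R two_isUnit
  have coeff_monomial (i j k : ℕ) (h : (j + 2 * k : ZMod 5) ≠ 4) :
      coeff n (a ^ i * b ^ j * c ^ k) = 0 := by
    have mem := SetLike.mul_mem_graded (SetLike.mul_mem_graded (SetLike.pow_mem_graded i ha)
      (SetLike.pow_mem_graded j hb)) (SetLike.pow_mem_graded k hc)
    refine mem n (hn.trans_ne ?_)
    simpa [mul_comm] using h.symm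
  rw [hF, add_add_pow_four_of_sq_add_mul_eq_zero hrel]
  simp (disch := decide) only [map_add, map_sub, map_nsmul, coeff_monomial, smul_zero, add_zero,
    sub_zero]
  rw [nsmul_eq_mul, Nat.cast_ofNat, five, zero_mul, sub_zero]

end FourthPower

section Frobenius

variable {p : ℕ}

theorem coeff_mul_expand_eq_zero {R : Type*} [CommRing R] (hp : p ≠ 0) {f g : R⟦X⟧} {n : ℕ}
    (h : ∀ i j, i + p * j = n → coeff i f = 0 ∨ coeff j g = 0) :
    coeff n (f * expand p hp g) = 0 := by
  rw [coeff_mul]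
  refine sum_eq_zero fun ⟨i, l⟩ hil ↦ ?_
  rw [HasAntidiagonal.mem_antidiagonal] at hil
  by_cases hl : p ∣ l
  · obtain ⟨j, rfl⟩ := hl
    rw [coeff_expand_mul]
    obtain hi | hj := h i j hil
    · rw [hi, zero_mul]
    · rw [hj, mul_zero]
  · rw [coeff_expand_of_not_dvd p hp _ hl, mul_zero]

variable [Fact p.Prime]

theorem pow_prime_eq_expand (f : (ZMod p)⟦X⟧) : f ^ p = expand p (NeZero.ne p) f := by
  have h := MvPowerSeries.map_frobenius_expand (R := ZMod p) (σ := Unit) p (NeZero.ne p) (f := f)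
  rw [ZMod.frobenius_zmod, MvPowerSeries.map_id] at h
  exact h.symm

theorem mk_colouredPartitions_eq_mul_expand {r s t : ℕ} (h : r + s = p * t) :
    (mk fun n ↦ (colouredPartitions r n : ZMod p)) = pentagonalSeries (ZMod p) ^ s *
      expand p (NeZero.ne p) (mk fun n ↦ (colouredPartitions t n : ZMod p)) := by
  set F := pentagonalSeries (ZMod p)
  set P := fun r ↦ mk fun n ↦ (colouredPartitions r n : ZMod p)
  have inverse (r : ℕ) : P r * F ^ r = 1 := mk_colouredPartitions_mul_pentagonalSeries_pow _ r
  calc P r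
    _ = P r * (P t * F ^ t) ^ p := by rw [inverse, one_pow, mul_one]
    _ = (P r * F ^ r) * (F ^ s * P t ^ p) := by
      rw [mul_pow, ← pow_mul, mul_comm t, ← h]; ring
    _ = F ^ s * expand p (NeZero.ne p) (P t) := by rw [inverse, one_mul, pow_prime_eq_expand]

theorem prime_dvd_colouredPartitions_of_add_eq_mul {r s t n : ℕ} (h : r + s = p * t)
    (hn : ∀ i j, i + p * j = n →
      coeff i (pentagonalSeries (ZMod p) ^ s) = 0 ∨ p ∣ colouredPartitions t j) :
    p ∣ colouredPartitions r n := by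
  rw [← ZMod.natCast_eq_zero_iff, ← coeff_mk n fun n ↦ (colouredPartitions r n : ZMod p),
    mk_colouredPartitions_eq_mul_expand h]
  refine coeff_mul_expand_eq_zero _ fun i j hij ↦ (hn i j hij).imp_right fun hj ↦ ?_
  rwa [coeff_mk, ZMod.natCast_eq_zero_iff]

end Frobenius

theorem five_dvd_colouredPartitions_five_mul_add_one (k n : ℕ) :
    5 ∣ colouredPartitions (5 * k + 1) (5 * n + 4) := by
  have : Fact (Nat.Prime 5) := ⟨Nat.prime_five⟩
  refine prime_dvd_colouredPartitions_of_add_eq_mul (by ring : 5 * k + 1 + 4 = 5 * (k + 1))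
    fun i j hij ↦ .inl (coeff_pentagonalSeries_pow_four_eq_zero _ ?_)
  exact (ZMod.natCast_eq_natCast_iff' i 4 5).2 (by omega)

theorem colouredPartitions_cong_mod5_25k4 (k n : ℕ) :
    5 ∣ colouredPartitions (25 * k + 4) (25 * n + 21) := by
  have : Fact (Nat.Prime 5) := ⟨Nat.prime_five⟩
  refine prime_dvd_colouredPartitions_of_add_eq_mul
    (by ring : 25 * k + 4 + 1 = 5 * (5 * k + 1)) fun i j hij ↦ ?_
  rw [pow_one]
  by_cases hi : i ∈ Set.range pentagonal
  · right
    obtain ⟨l, rfl⟩ := hi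
    have pentagonal_mod : pentagonal l % 25 = 1 := pentagonal_mod_twentyFive (by omega)
    obtain ⟨m, rfl⟩ : ∃ m, j = 5 * m + 4 := ⟨j / 5, by omega⟩
    exact five_dvd_colouredPartitions_five_mul_add_one k m
  · exact .inl (coeff_pentagonalSeries_eq_zero _ hi)
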